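/- Let m ∈ ℕ with m ≥ 1, let a₁,…,a_m ∈ ℕ, let p₁,…,p_m be minimal idempotent ultrafilters on ℕ, and let A ∈ a₁·p₁ + ⋯ + a_m·p_m. Then for every T ∈ 𝒫_f(ℙ) there exist functions α₁,…,α_m : 𝒫_f(ℕ^ℕ) → ℕ and H₁,…,H_m : 𝒫_f(ℕ^ℕ) → 𝒫_f(ℕ) such that (1) whenever F ⊊ G in 𝒫_f(ℕ^ℕ), max H_l(F) < min H_l(G) for every l ∈ {1,…,m}, and (2) whenever G₁ ⊊ G₂ ⊊ ⋯ is an infinite strictly increasing chain in 𝒫_f(ℕ^ℕ), f_i ∈ G_i for each i ∈ ℕ, P₁,…,P_m ∈ T, and β₁ < ⋯ < β_m are in 𝒫_f(ℕ), then Σ_{l=1}^m a_l·(Σ_{i∈β_l}α_l(G_i) + P_l(Σ_{i∈β_l}Σ_{t∈H_l(G_i)}f_i(t))) ∈ A. -/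

import Mathlib

namespace MultiCST

/-- The sum `p + q` of ultrafilters on ℕ: `A ∈ p + q` iff `{x : {y : x+y ∈ A} ∈ q} ∈ p`. -/
def uAdd (p q : Ultrafilter ℕ) : Ultrafilter ℕ :=
  p.bind fun x => q.map fun y => x + y

/-- `A ⊆ ℕ` is a J-set. -/
def IsJSet (A : Set ℕ) : Prop :=
  ∀ F : Finset (ℕ → ℕ), F.Nonempty →
    ∃ (a : ℕ) (β : Finset ℕ), β.Nonempty ∧ ∀ f ∈ F, a + ∑ t ∈ β, f t ∈ A

/-- `p ∈ 𝒥`: every member of `p` is a J-set. -/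
def MemJ (p : Ultrafilter ℕ) : Prop := ∀ A : Set ℕ, A ∈ p → IsJSet A

/-- `p` is an idempotent ultrafilter. -/
def IdempotentUF (p : Ultrafilter ℕ) : Prop := uAdd p p = p

/-- `p` is a minimal idempotent ultrafilter. -/
def IsMinimalIdempotent (p : Ultrafilter ℕ) : Prop :=
  IdempotentUF p ∧
    ∀ q : Ultrafilter ℕ, IdempotentUF q → uAdd q p = q → uAdd p q = q → q = p

/-- Tensor product `⊗_{i=1}^m p_i` of ultrafilters on ℕ, as an ultrafilter on `Fin m → ℕ`. -/
def tensor : ∀ m : ℕ, (Fin m → Ultrafilter ℕ) → Ultrafilter (Fin m → ℕ)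
  | 0, _ => pure fun i => i.elim0
  | m + 1, p =>
      (p 0).bind fun x => (tensor m fun i => p i.succ).map fun v => Fin.cons x v

/-- `f : ℕ → ℕ` is (given by) a polynomial with coefficients in ℕ and zero constant term. -/
def IsPolyZeroConst (f : ℕ → ℕ) : Prop :=
  ∃ P : Polynomial ℕ, P.coeff 0 = 0 ∧ ∀ x, f x = P.eval x

/-- The linear combination `a₁·p₁ + a₂·p₂ + ⋯ + a_m·p_m` of ultrafilters on ℕ. -/
def linComb : ∀ m : ℕ, (Fin m → ℕ) → (Fin m → Ultrafilter ℕ) → Ultrafilter ℕ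
  | 0, _, _ => pure 0
  | m + 1, a, p =>
      uAdd ((p 0).map fun x => a 0 * x)
        (linComb m (fun i => a i.succ) fun i => p i.succ)

/-!
Call a set of integers large if it belongs to an ultrafilter of the left ideal `βℕ + p`. Minimality
of the idempotent `p` makes every large set syndetic relative to the large sets, and van der Corput
differencing then shows, by PET induction, that a large set returns to itself simultaneously along
finitely many polynomial maps, at most times with respect to any idempotent ultrafilter of times.
Applied to an idempotent containing the finite sums of finitely many sequences, this makes every
member of `p` a polynomial J-set.

For one idempotent, `α` and `H` are chosen by well-founded recursion on finite sets of sequences so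
that the value of every finite chain stays in the part of the given set from which `p`-most
translations lead back to it; the next step of a chain shifts the argument of the polynomials, which
replaces them by their re-based versions. For `a₁·p₁ + ⋯ + a_m·p_m` the first summand is peeled off:
only finitely many contributions of the first block precede a given finite set, so all the
conditions they impose on the remaining blocks can be met at once.
-/

open Filter Polynomial

/-! ### Polynomial maps into an abelian group -/

section PolynomialMaps

variable {M G : Type*} [AddMonoid M] [AddCommGroup G]

/-- The map `f` re-based at the point `h`: the translate `y ↦ f (h + y)`, normalized to vanish
at `0`. It plays the role of the finite difference in the induction on degrees. -/
def rebase (h : M) : (M → G) →+ (M → G) where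
  toFun f y := f (h + y) - f h
  map_zero' := by ext; simp
  map_add' f g := by ext; simp only [Pi.add_apply]; abel

theorem rebase_apply (h : M) (f : M → G) (y : M) : rebase h f y = f (h + y) - f h := rfl

variable (M G) in
/-- The group of polynomial maps `M → G` of degree at most `d` that vanish at `0`: only the zero
map for `d = 0`, and otherwise the maps all of whose differences `y ↦ f (h + y) - f h - f y` have
degree at most `d - 1`. -/
def polyMap : ℕ → AddSubgroup (M → G)
  | 0 => ⊥
  | d + 1 => ⨅ h : M, (polyMap d).comap (rebase h - AddMonoidHom.id (M → G))

theorem mem_polyMap_zero {f : M → G} : f ∈ polyMap M G 0 ↔ f = 0 :=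
  AddSubgroup.mem_bot

theorem mem_polyMap_succ {f : M → G} {d : ℕ} :
    f ∈ polyMap M G (d + 1) ↔ ∀ h, rebase h f - f ∈ polyMap M G d := by
  simp [polyMap, AddSubgroup.mem_iInf]

theorem polyMap_mono : Monotone (polyMap M G) := by
  refine monotone_nat_of_le_succ fun d => ?_
  induction d with
  | zero => exact bot_le
  | succ d ih => exact fun f hf => mem_polyMap_succ.2 fun h => ih (mem_polyMap_succ.1 hf h)

theorem apply_zero_of_mem_polyMap {f : M → G} {d : ℕ} (hf : f ∈ polyMap M G d) : f 0 = 0 := by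
  induction d generalizing f with
  | zero => rw [mem_polyMap_zero.1 hf, Pi.zero_apply]
  | succ d ih => simpa [rebase_apply] using ih (mem_polyMap_succ.1 hf 0)

theorem rebase_mem_polyMap (h : M) {f : M → G} {d : ℕ} (hf : f ∈ polyMap M G d) :
    rebase h f ∈ polyMap M G d := by
  cases d with
  | zero => simp [mem_polyMap_zero.1 hf, zero_mem]
  | succ d =>
    simpa using add_mem (polyMap_mono d.le_succ (mem_polyMap_succ.1 hf h)) hf

theorem mem_polyMap_of_rebase {h : M} {f : M → G} {d e : ℕ} (hf : f ∈ polyMap M G d)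
    (hr : rebase h f ∈ polyMap M G e) : f ∈ polyMap M G e := by
  induction d with
  | zero => exact polyMap_mono e.zero_le hf
  | succ d ih =>
    rcases Nat.lt_or_ge d e with hde | hed
    · exact polyMap_mono hde hf
    · refine ih ?_
      simpa using sub_mem (polyMap_mono hed hr) (mem_polyMap_succ.1 hf h)

theorem addMonoidHom_comp_mem_polyMap {G' : Type*} [AddCommGroup G'] (φ : G →+ G') {f : M → G}
    {d : ℕ} (hf : f ∈ polyMap M G d) : φ ∘ f ∈ polyMap M G' d := by
  induction d generalizing f with
  | zero => rw [mem_polyMap_zero.1 hf, mem_polyMap_zero]; ext; simp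
  | succ d ih =>
    refine mem_polyMap_succ.2 fun h => ?_
    convert ih (mem_polyMap_succ.1 hf h) using 1
    ext y
    simp [rebase_apply]

theorem comp_addMonoidHom_mem_polyMap {N : Type*} [AddMonoid N] (φ : N →+ M) {f : M → G}
    {d : ℕ} (hf : f ∈ polyMap M G d) : f ∘ φ ∈ polyMap N G d := by
  induction d generalizing f with
  | zero => rw [mem_polyMap_zero.1 hf, mem_polyMap_zero, Pi.zero_comp]
  | succ d ih =>
    refine mem_polyMap_succ.2 fun h => ?_
    convert ih (mem_polyMap_succ.1 hf (φ h)) using 1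
    ext y
    simp [rebase_apply]

theorem addMonoidHom_mem_polyMap_one (φ : M →+ G) : ⇑φ ∈ polyMap M G 1 := by
  refine mem_polyMap_succ.2 fun h => mem_polyMap_zero.2 ?_
  ext y
  simp [rebase_apply]

theorem rebase_mul_sub {R : Type*} [NonUnitalNonAssocRing R] (h : M) (f g : M → R) :
    rebase h (f * g) - f * g = (rebase h f - f) * rebase h g + f * (rebase h g - g) +
      AddMonoidHom.mulLeft (f h) ∘ rebase h g + AddMonoidHom.mulRight (g h) ∘ rebase h f := by
  ext y
  simp only [rebase_apply, Pi.sub_apply, Pi.mul_apply, Pi.add_apply, Function.comp_apply,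
    AddMonoidHom.coe_mulLeft, AddMonoidHom.coe_mulRight, mul_sub, sub_mul]
  abel

theorem mul_mem_polyMap {R : Type*} [NonUnitalNonAssocRing R] {f g : M → R} {a b : ℕ}
    (hf : f ∈ polyMap M R a) (hg : g ∈ polyMap M R b) : f * g ∈ polyMap M R (a + b) := by
  induction hn : a + b generalizing f g a b with
  | zero =>
    obtain rfl : a = 0 := by omega
    rw [mem_polyMap_zero.1 hf, zero_mul]
    exact zero_mem _
  | succ n ih =>
    rcases a with _ | a
    · rw [mem_polyMap_zero.1 hf, zero_mul]
      exact zero_mem _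
    rcases b with _ | b
    · rw [mem_polyMap_zero.1 hg, mul_zero]
      exact zero_mem _
    refine mem_polyMap_succ.2 fun h => ?_
    rw [rebase_mul_sub]
    have hfh := rebase_mem_polyMap h hf
    have hgh := rebase_mem_polyMap h hg
    refine add_mem (add_mem (add_mem ?_ ?_) ?_) ?_
    · exact ih (mem_polyMap_succ.1 hf h) hgh (by omega)
    · exact ih hf (mem_polyMap_succ.1 hg h) (by omega)
    · exact polyMap_mono (by omega) (addMonoidHom_comp_mem_polyMap _ hgh)
    · exact polyMap_mono (by omega) (addMonoidHom_comp_mem_polyMap _ hfh)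

theorem pow_mem_polyMap {R : Type*} [Ring R] {f : M → R} (hf : f ∈ polyMap M R 1) {n : ℕ}
    (hn : n ≠ 0) : f ^ n ∈ polyMap M R n := by
  induction n, Nat.one_le_iff_ne_zero.2 hn using Nat.le_induction with
  | base => simpa using hf
  | succ n hn ih => simpa only [pow_succ] using mul_mem_polyMap (ih (by omega)) hf

theorem eval_mem_polyMap {R : Type*} [Ring R] {Q : R[X]} (hQ : Q.coeff 0 = 0) :
    (fun x => Q.eval x) ∈ polyMap R R Q.natDegree := by
  have hsum : (fun x => Q.eval x) =
      ∑ k ∈ Q.support, AddMonoidHom.mulLeft (Q.coeff k) ∘ ((AddMonoidHom.id R : R → R) ^ k) := by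
    ext x
    simp [eval_eq_sum, Polynomial.sum]
  rw [hsum]
  refine sum_mem fun k hk => addMonoidHom_comp_mem_polyMap _ ?_
  have hk0 : k ≠ 0 := by
    rintro rfl
    exact mem_support_iff.1 hk hQ
  exact polyMap_mono (le_natDegree_of_mem_supp _ hk)
    (pow_mem_polyMap (addMonoidHom_mem_polyMap_one _) hk0)

/-- `f` is a polynomial map of some degree, with `f 0 = 0`. -/
def IsPolynomialMap (f : M → G) : Prop := ∃ d, f ∈ polyMap M G d

theorem IsPolynomialMap.apply_zero {f : M → G} : IsPolynomialMap f → f 0 = 0 :=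
  fun ⟨_, hf⟩ => apply_zero_of_mem_polyMap hf

theorem IsPolynomialMap.rebase {f : M → G} (h : M) :
    IsPolynomialMap f → IsPolynomialMap (rebase h f) :=
  fun ⟨d, hf⟩ => ⟨d, rebase_mem_polyMap h hf⟩

theorem IsPolynomialMap.comp_addMonoidHom {N : Type*} [AddMonoid N] {f : M → G} (φ : N →+ M) :
    IsPolynomialMap f → IsPolynomialMap (f ∘ φ) :=
  fun ⟨d, hf⟩ => ⟨d, comp_addMonoidHom_mem_polyMap φ hf⟩

theorem exists_forall_mem_polyMap {F : Finset (M → G)} (hF : ∀ f ∈ F, IsPolynomialMap f) :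
    ∃ d, ∀ f ∈ F, f ∈ polyMap M G d := by
  choose! deg hdeg using hF
  exact ⟨F.sup deg, fun f hf => polyMap_mono (Finset.le_sup hf) (hdeg f hf)⟩

theorem exists_mem_polyMap_succ_of_minimal {F : Finset (M → G)} (hF0 : 0 ∉ F) {d : ℕ}
    (hFd : ∃ f ∈ F, f ∈ polyMap M G d) :
    ∃ e < d, ∃ f₀ ∈ F, f₀ ∈ polyMap M G (e + 1) ∧ ∀ f ∈ F, f ∉ polyMap M G e := by
  induction d with
  | zero =>
    obtain ⟨f, hf, hf0⟩ := hFd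
    exact absurd (mem_polyMap_zero.1 hf0 ▸ hf) hF0
  | succ d ih =>
    by_cases h : ∃ f ∈ F, f ∈ polyMap M G d
    · obtain ⟨e, hed, he⟩ := ih h
      exact ⟨e, hed.trans d.lt_succ_self, he⟩
    · obtain ⟨f₀, hf₀⟩ := hFd
      exact ⟨d, d.lt_succ_self, f₀, hf₀.1, hf₀.2, fun f hf hfd => h ⟨f, hf, hfd⟩⟩

end PolynomialMaps

theorem IsPolyZeroConst.isPolynomialMap {P : ℕ → ℕ} (hP : IsPolyZeroConst P) :
    IsPolynomialMap fun x => (P x : ℤ) := by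
  obtain ⟨Q, hQ0, hQ⟩ := hP
  have hcast : (fun x => (P x : ℤ)) =
      (fun x => (Q.map (Nat.castRingHom ℤ)).eval x) ∘ Nat.castAddMonoidHom ℤ := by
    ext x
    simp [hQ, eval_natCast_map]
  rw [hcast]
  exact ⟨_, comp_addMonoidHom_mem_polyMap _ (eval_mem_polyMap (by simp [hQ0]))⟩

/-! ### Polynomial recurrence along an idempotent ultrafilter -/

section Recurrence

attribute [local instance] Ultrafilter.add Ultrafilter.addSemigroup

theorem exists_subset_forall_eventually_add_mem {M : Type*} [AddSemigroup M] {q : Ultrafilter M}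
    (hq : q + q = q) {S : Set M} (hS : ∀ᶠ y in q, y ∈ S) :
    ∃ S' ⊆ S, (∀ᶠ y in q, y ∈ S') ∧ ∀ y ∈ S', ∀ᶠ z in q, y + z ∈ S' := by
  have hadd : ∀ {U : Set M}, (∀ᶠ y in q, y ∈ U) → ∀ᶠ y in q, ∀ᶠ z in q, y + z ∈ U :=
    fun hU => (Ultrafilter.eventually_add q q _).1 (hq.symm ▸ hU)
  refine ⟨{y | y ∈ S ∧ ∀ᶠ z in q, y + z ∈ S}, fun y hy => hy.1, hS.and (hadd hS), ?_⟩
  rintro y ⟨-, hy⟩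
  filter_upwards [hy, hadd (U := {z | y + z ∈ S}) hy] with z hz hz'
  exact ⟨hz, by simpa only [add_assoc] using hz'⟩

/-- A family of large subsets of `G` that is upward closed, translation invariant, and in which
every member `B` is syndetic relative to the family: finitely many translates of `B` suffice to
meet each large set in a large set. -/
structure IsSyndeticFamily {G : Type*} [AddCommGroup G] (𝓑 : Set (Set G)) : Prop where
  mono : ∀ ⦃B C⦄, B ∈ 𝓑 → B ⊆ C → C ∈ 𝓑
  translate : ∀ ⦃B⦄, B ∈ 𝓑 → ∀ k, {x | x + k ∈ B} ∈ 𝓑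
  syndetic : ∀ ⦃B⦄, B ∈ 𝓑 → ∃ E : Finset G, ∀ C ∈ 𝓑, ∃ n ∈ E, {x ∈ C | x + n ∈ B} ∈ 𝓑

variable {M G : Type*} [AddCommGroup G] {𝓑 : Set (Set G)} {q : Ultrafilter M}
  {F : Finset (M → G)} {f₀ : M → G} {B C : Set G} {Y : Set M} {S : Finset G} {g : G → M} {n : G}

/-- Every set `B` of the family `𝓑` returns to itself simultaneously along all the maps in `F`,
at `q`-most times. -/
def IsRecurrentAlong (𝓑 : Set (Set G)) (q : Ultrafilter M) (F : Finset (M → G)) : Prop :=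
  ∀ B ∈ 𝓑, ∀ᶠ y in q, {x ∈ B | ∀ f ∈ F, x + f y ∈ B} ∈ 𝓑

/-- For every color `n ∈ S` the time `g n` lies in `Y`, and moves each point of `C` along each
map in `F` into `B` translated by `-n`. -/
def IsReturnSystem (F : Finset (M → G)) (B : Set G) (Y : Set M) (S : Finset G) (C : Set G)
    (g : G → M) : Prop :=
  ∀ n ∈ S, g n ∈ Y ∧ ∀ x ∈ C, ∀ f ∈ F, x + f (g n) + n ∈ B

theorem IsReturnSystem.mem_of_color_mem (h𝓑 : IsSyndeticFamily 𝓑)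
    (hg : IsReturnSystem F B Y S C g) (hnS : n ∈ S) (hn : {x ∈ C | x + n ∈ B} ∈ 𝓑) :
    {x ∈ B | ∀ f ∈ F, x + f (g n) ∈ B} ∈ 𝓑 := by
  refine h𝓑.mono (h𝓑.translate hn (-n)) ?_
  rintro x ⟨hxC, hxB⟩
  refine ⟨by simpa using hxB, fun f hf => ?_⟩
  have hx := (hg n hnS).2 _ hxC f hf
  rwa [add_right_comm, neg_add_cancel_right] at hx

variable [AddMonoid M]

open Classical in
/-- The family to which van der Corput differencing against `f₀` reduces the family `F`, with
base points taken from `H`. -/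
noncomputable def derived (F : Finset (M → G)) (f₀ : M → G) (H : Finset M) : Finset (M → G) :=
  Finset.image₂ (fun f h => rebase h f - f₀) F H

theorem mem_derived {H : Finset M} {f' : M → G} :
    f' ∈ derived F f₀ H ↔ ∃ f ∈ F, ∃ h ∈ H, rebase h f - f₀ = f' := by
  simp [derived]

open Classical in
theorem IsReturnSystem.exists_insert (h𝓑 : IsSyndeticFamily 𝓑) (hF : ∀ f ∈ F, f 0 = 0)
    (hder : ∀ H, IsRecurrentAlong 𝓑 q (derived F f₀ H)) (hYq : ∀ᶠ y in q, y ∈ Y)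
    (hY : ∀ y ∈ Y, ∀ᶠ z in q, y + z ∈ Y) (hg : IsReturnSystem F B Y S C g)
    (hn : {x ∈ C | x + n ∈ B} ∈ 𝓑) :
    ∃ C' ∈ 𝓑, ∃ g', IsReturnSystem F B Y (insert n S) C' g' := by
  let g₀ := Function.update g n 0
  have hYS : ∀ᶠ y in q, ∀ k ∈ insert n S, g₀ k + y ∈ Y := by
    refine (eventually_all_finset _).2 fun k hk => ?_
    rcases eq_or_ne k n with rfl | hkn
    · simpa [g₀] using hYq
    · simpa [g₀, hkn] using hY _ (hg k (Finset.mem_of_mem_insert_of_ne hk hkn)).1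
  obtain ⟨y, hyY, hy⟩ := (hYS.and (hder ((insert n S).image g₀) _ hn)).exists
  refine ⟨_, h𝓑.translate hy (f₀ y), fun k => g₀ k + y, fun k hk => ⟨hyY k hk, ?_⟩⟩
  rintro x ⟨-, hx⟩ f hf
  have hmem : rebase (g₀ k) f - f₀ ∈ derived F f₀ ((insert n S).image g₀) :=
    mem_derived.2 ⟨f, hf, _, Finset.mem_image_of_mem _ hk, rfl⟩
  obtain ⟨hxC, hxB⟩ : x + rebase (g₀ k) f y ∈ {x ∈ C | x + n ∈ B} := by
    simpa using hx _ hmem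
  rcases eq_or_ne k n with rfl | hkn
  · simpa [g₀, rebase_apply, hF f hf] using hxB
  · have hk := (hg k (Finset.mem_of_mem_insert_of_ne hk hkn)).2 _ hxC f hf
    simpa [g₀, hkn, rebase_apply, ← add_sub_assoc] using hk

-- Each step meets the set in a new color, and there are only finitely many colors.
theorem IsRecurrentAlong.of_derived (h𝓑 : IsSyndeticFamily 𝓑) (hq : q + q = q)
    (hF : ∀ f ∈ F, f 0 = 0) (hder : ∀ H, IsRecurrentAlong 𝓑 q (derived F f₀ H)) :
    IsRecurrentAlong 𝓑 q F := by
  classical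
  intro B hB
  by_contra hbad
  rw [← Ultrafilter.eventually_not] at hbad
  obtain ⟨Y, hYbad, hYq, hY⟩ := exists_subset_forall_eventually_add_mem hq hbad
  obtain ⟨E, hE⟩ := h𝓑.syndetic hB
  have hcolors : ∀ k, ∃ S ⊆ E, S.card = k ∧ ∃ C ∈ 𝓑, ∃ g, IsReturnSystem F B Y S C g := by
    intro k
    induction k with
    | zero => exact ⟨∅, by simp, rfl, B, hB, 0, by simp [IsReturnSystem]⟩
    | succ k ih =>
      obtain ⟨S, hSE, hcard, C, hC, g, hg⟩ := ih
      obtain ⟨n, hnE, hn⟩ := hE C hC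
      have hnS : n ∉ S := fun hnS => hYbad (hg n hnS).1 (hg.mem_of_color_mem h𝓑 hnS hn)
      exact ⟨insert n S, Finset.insert_subset hnE hSE,
        by rw [Finset.card_insert_of_notMem hnS, hcard], hg.exists_insert h𝓑 hF hder hYq hY hn⟩
  obtain ⟨S, hSE, hcard, -⟩ := hcolors (E.card + 1)
  exact absurd (Finset.card_le_card hSE) (by omega)

open Classical in
/-- The nonzero classes, modulo degree `e`, of the maps in `F` of degree at most `e + 1`: a
coordinate-free version of the set of their leading coefficients. -/
noncomputable def leadingClasses (F : Finset (M → G)) (e : ℕ) :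
    Finset ((M → G) ⧸ polyMap M G e) :=
  ((F.filter (· ∈ polyMap M G (e + 1))).image QuotientAddGroup.mk).erase 0

theorem mem_leadingClasses {e : ℕ} {z : (M → G) ⧸ polyMap M G e} :
    z ∈ leadingClasses F e ↔ z ≠ 0 ∧ ∃ f ∈ F, f ∈ polyMap M G (e + 1) ∧ ↑f = z := by
  simp [leadingClasses, and_assoc]

theorem leadingClasses_mono {F' : Finset (M → G)} (h : F ⊆ F') (e : ℕ) :
    leadingClasses F e ⊆ leadingClasses F' e := by
  intro z
  simp only [mem_leadingClasses]
  exact fun ⟨hz, f, hf, hfz⟩ => ⟨hz, f, h hf, hfz⟩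

section

variable {e j : ℕ} {H : Finset M}

theorem add_mem_leadingClasses_of_derived (hF : ∀ f ∈ F, IsPolynomialMap f)
    (hmin : ∀ f ∈ F, f ∉ polyMap M G e) (hf₀ : f₀ ∈ polyMap M G (e + 1)) (hej : e ≤ j)
    {z : (M → G) ⧸ polyMap M G j} (hz : z ∈ leadingClasses (derived F f₀ H) j) :
    z + f₀ ∈ leadingClasses F j := by
  obtain ⟨hz0, f', hf', hf'j, rfl⟩ := mem_leadingClasses.1 hz
  obtain ⟨f, hf, h, -, rfl⟩ := mem_derived.1 hf'
  have hfj : f ∈ polyMap M G (j + 1) := by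
    obtain ⟨d, hd⟩ := hF f hf
    refine mem_polyMap_of_rebase (h := h) hd ?_
    simpa using add_mem hf'j (polyMap_mono (Nat.succ_le_succ hej) hf₀)
  have hclass : ((rebase h f - f₀ : M → G) : (M → G) ⧸ polyMap M G j) + f₀ = f := by
    rw [← QuotientAddGroup.mk_add, sub_add_cancel]
    exact QuotientAddGroup.eq_iff_sub_mem.2 (mem_polyMap_succ.1 hfj h)
  refine mem_leadingClasses.2 ⟨?_, f, hf, hfj, hclass.symm⟩
  rcases hej.eq_or_lt with rfl | hlt
  · rw [hclass]
    exact fun h0 => hmin f hf ((QuotientAddGroup.eq_zero_iff f).1 h0)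
  · rwa [(QuotientAddGroup.eq_zero_iff f₀).2 (polyMap_mono hlt hf₀), add_zero]

theorem card_leadingClasses_derived_le (hF : ∀ f ∈ F, IsPolynomialMap f)
    (hmin : ∀ f ∈ F, f ∉ polyMap M G e) (hf₀ : f₀ ∈ polyMap M G (e + 1)) (hej : e ≤ j) :
    (leadingClasses (derived F f₀ H) j).card ≤ (leadingClasses F j).card :=
  Finset.card_le_card_of_injOn (· + f₀)
    (fun _ hz => add_mem_leadingClasses_of_derived hF hmin hf₀ hej hz)
    (add_left_injective _).injOn

theorem card_leadingClasses_derived_lt (hF : ∀ f ∈ F, IsPolynomialMap f)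
    (hmin : ∀ f ∈ F, f ∉ polyMap M G e) (hf₀F : f₀ ∈ F) (hf₀ : f₀ ∈ polyMap M G (e + 1)) :
    (leadingClasses (derived F f₀ H) e).card < (leadingClasses F e).card := by
  classical
  have hclass : (f₀ : (M → G) ⧸ polyMap M G e) ∈ leadingClasses F e :=
    mem_leadingClasses.2
      ⟨fun h0 => hmin f₀ hf₀F ((QuotientAddGroup.eq_zero_iff f₀).1 h0), f₀, hf₀F, hf₀, rfl⟩
  refine lt_of_le_of_lt (Finset.card_le_card_of_injOn (· + f₀) (fun z hz => ?_)
    (add_left_injective _).injOn) (Finset.card_erase_lt_of_mem hclass)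
  refine Finset.mem_erase.2 ⟨?_, add_mem_leadingClasses_of_derived hF hmin hf₀ le_rfl hz⟩
  simpa using (mem_leadingClasses.1 hz).1

end

theorem toColex_lt_toColex_of_lt {ι α : Type*} [LinearOrder ι] [WellFoundedGT ι]
    [PartialOrder α] {u v : ι → α} {i : ι} (hi : u i < v i) (hle : ∀ j, i < j → u j ≤ v j) :
    toColex u < toColex v := by
  let w : ι → α := fun j => if i < j then v j else u j
  have huw : u ≤ w := by
    intro j
    by_cases hij : i < j
    · simpa [w, hij] using hle j hij
    · simp [w, hij]
  exact (Pi.toColex_monotone huw).trans_lt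
    ⟨i, fun j hij => by simp [w, hij], by simpa [w] using hi⟩

/-- The weight of a family of maps of degree at most `d`, by which PET induction proceeds: the
numbers of leading classes in each degree, compared from the highest degree down. -/
noncomputable def weight (d : ℕ) (F : Finset (M → G)) : Colex (Fin d → ℕ) :=
  toColex fun e => (leadingClasses F e).card

theorem weight_mono (d : ℕ) : Monotone (weight d : Finset (M → G) → _) := fun _ _ h =>
  Pi.toColex_monotone fun e => Finset.card_le_card (leadingClasses_mono h e)

theorem isRecurrentAlong_of_forall_mem_polyMap (h𝓑 : IsSyndeticFamily 𝓑) (hq : q + q = q)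
    {d : ℕ} (hF : ∀ f ∈ F, f ∈ polyMap M G d) : IsRecurrentAlong 𝓑 q F := by
  classical
  induction hw : weight d F using WellFoundedLT.induction generalizing F with
  | ind w ih =>
  suffices h : IsRecurrentAlong 𝓑 q (F.erase 0) by
    intro B hB
    filter_upwards [h B hB] with y hy
    refine h𝓑.mono hy fun x hx => ⟨hx.1, fun f hf => ?_⟩
    rcases eq_or_ne f 0 with rfl | hf0
    · simpa using hx.1
    · exact hx.2 f (Finset.mem_erase.2 ⟨hf0, hf⟩)
  have hF' : ∀ f ∈ F.erase 0, f ∈ polyMap M G d := fun f hf => hF f (Finset.mem_of_mem_erase hf)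
  rcases (F.erase 0).eq_empty_or_nonempty with hempty | ⟨f₁, hf₁⟩
  · intro B hB
    simpa [hempty] using hB
  obtain ⟨e, hed, f₀, hf₀F, hf₀, hmin⟩ :=
    exists_mem_polyMap_succ_of_minimal (Finset.notMem_erase 0 F) ⟨f₁, hf₁, hF' f₁ hf₁⟩
  have hpoly : ∀ f ∈ F.erase 0, IsPolynomialMap f := fun f hf => ⟨d, hF' f hf⟩
  refine .of_derived (f₀ := f₀) h𝓑 hq (fun f hf => (hpoly f hf).apply_zero) fun H => ?_
  refine ih _ ?_ (fun f' hf' => ?_) rfl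
  · rw [← hw]
    refine lt_of_lt_of_le ?_ (weight_mono d (F.erase_subset 0))
    exact toColex_lt_toColex_of_lt (i := ⟨e, hed⟩)
      (card_leadingClasses_derived_lt hpoly hmin hf₀F hf₀)
      fun j hj => card_leadingClasses_derived_le hpoly hmin hf₀ hj.le
  · obtain ⟨f, hf, h, -, rfl⟩ := mem_derived.1 hf'
    exact sub_mem (rebase_mem_polyMap h (hF' f hf)) (hF' f₀ hf₀F)

theorem isRecurrentAlong_of_isPolynomialMap (h𝓑 : IsSyndeticFamily 𝓑) (hq : q + q = q)
    (hF : ∀ f ∈ F, IsPolynomialMap f) : IsRecurrentAlong 𝓑 q F :=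
  let ⟨_, hd⟩ := exists_forall_mem_polyMap hF
  isRecurrentAlong_of_forall_mem_polyMap h𝓑 hq hd

end Recurrence

/-! ### Minimal idempotents and polynomial J-sets -/

section MinimalIdempotents

attribute [local instance] Ultrafilter.add Ultrafilter.addSemigroup

theorem exists_add_eq_of_minimal_idempotent {S : Type*} [AddSemigroup S] [TopologicalSpace S]
    [CompactSpace S] [T2Space S] (hcont : ∀ r : S, Continuous (· + r)) {p : S} (hp : p + p = p)
    (hmin : ∀ q, q + q = q → q + p = q → p + q = q → q = p) (r : S) :
    ∃ t, t + (r + p) = p := by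
  obtain ⟨e, ⟨t, ht⟩, he⟩ := exists_idempotent_in_compact_add_subsemigroup hcont
    (Set.range (· + (r + p))) ⟨_, r, rfl⟩ (isCompact_range (hcont _)) (by
      rintro _ ⟨x, rfl⟩ _ ⟨y, rfl⟩
      exact ⟨x + (r + p) + y, by simp only [add_assoc]⟩)
  change t + (r + p) = e at ht
  have hep : e + p = e := by rw [← ht, add_assoc, add_assoc, hp]
  have hpe : p + e = p := hmin (p + e) (by rw [add_assoc, ← add_assoc e p e, hep, he])
    (by rw [add_assoc, hep]) (by rw [← add_assoc, hp])
  exact ⟨p + t, by rw [add_assoc, ht, hpe]⟩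

theorem uAdd_eq_add (p q : Ultrafilter ℕ) : uAdd p q = p + q :=
  Ultrafilter.ext fun _ => Iff.rfl

variable {p : Ultrafilter ℕ} {B : Set ℤ}

theorem IdempotentUF.exists_subset_forall_eventually_add_mem (hp : IdempotentUF p)
    (hB : ∀ᶠ n : ℕ in p, (n : ℤ) ∈ B) :
    ∃ B' ⊆ B, (∀ᶠ n : ℕ in p, (n : ℤ) ∈ B') ∧ ∀ y ∈ B', ∀ᶠ n : ℕ in p, y + n ∈ B' := by
  have hpp : p + p = p := by rw [← uAdd_eq_add, hp]
  obtain ⟨S, hSB, hS, hstar⟩ := MultiCST.exists_subset_forall_eventually_add_mem hpp hB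
  refine ⟨Nat.cast '' S, Set.image_subset_iff.2 hSB,
    hS.mono fun n hn => Set.mem_image_of_mem _ hn, ?_⟩
  rintro _ ⟨y, hy, rfl⟩
  exact (hstar y hy).mono fun n hn => ⟨y + n, hn, by push_cast; rfl⟩

theorem IsMinimalIdempotent.exists_add_eq (hp : IsMinimalIdempotent p) (r : Ultrafilter ℕ) :
    ∃ t, t + (r + p) = p := by
  simp only [IsMinimalIdempotent, IdempotentUF, uAdd_eq_add] at hp
  exact exists_add_eq_of_minimal_idempotent Ultrafilter.continuous_add_left hp.1 hp.2 r

/-- The sets of integers that are large for some ultrafilter in the left ideal `βℕ + p`. -/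
def leftIdealSets (p : Ultrafilter ℕ) : Set (Set ℤ) :=
  {B | ∃ r : Ultrafilter ℕ, ∀ᶠ n : ℕ in (r + p : Ultrafilter ℕ), (n : ℤ) ∈ B}

theorem eventually_pure_add {r : Ultrafilter ℕ} {j : ℕ} {φ : ℕ → Prop} :
    (∀ᶠ n in (pure j + r : Ultrafilter ℕ), φ n) ↔ ∀ᶠ n in r, φ (j + n) := by
  simp [Ultrafilter.eventually_add]

theorem IsMinimalIdempotent.exists_eventually_add_mem (hp : IsMinimalIdempotent p)
    (hB : B ∈ leftIdealSets p) (s : Ultrafilter ℕ) :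
    ∃ m : ℕ, ∀ᶠ n : ℕ in (s + p : Ultrafilter ℕ), ((m + n : ℕ) : ℤ) ∈ B := by
  obtain ⟨r, hr⟩ := hB
  obtain ⟨t, ht⟩ := hp.exists_add_eq s
  rw [← ht, ← add_assoc, Ultrafilter.eventually_add] at hr
  exact hr.exists

theorem IsMinimalIdempotent.translate_mem_leftIdealSets (hp : IsMinimalIdempotent p)
    (hB : B ∈ leftIdealSets p) (k : ℤ) : {x | x + k ∈ B} ∈ leftIdealSets p := by
  obtain ⟨j, rfl | rfl⟩ := k.eq_nat_or_neg
  · obtain ⟨m, hm⟩ := hp.exists_eventually_add_mem hB (pure j + p)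
    refine ⟨pure m + p, ?_⟩
    rw [add_assoc, eventually_pure_add] at hm ⊢
    filter_upwards [hm] with n hn
    simpa [add_comm, add_left_comm] using hn
  · obtain ⟨r, hr⟩ := hB
    refine ⟨pure j + r, ?_⟩
    rw [add_assoc, eventually_pure_add]
    filter_upwards [hr] with n hn
    simpa using hn

theorem IsMinimalIdempotent.isSyndeticFamily (hp : IsMinimalIdempotent p) :
    IsSyndeticFamily (leftIdealSets p) where
  mono _ _ := fun ⟨r, hr⟩ hBC => ⟨r, hr.mono fun _ hn => hBC hn⟩
  translate _ := hp.translate_mem_leftIdealSets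
  syndetic B hB := by
    let U (m : ℕ) : Set (Ultrafilter ℕ) :=
      {s | ∀ᶠ n : ℕ in (s + p : Ultrafilter ℕ), ((m + n : ℕ) : ℤ) ∈ B}
    have hU_open (m : ℕ) : IsOpen (U m) :=
      ultrafilter_isOpen_basic {k : ℕ | ∀ᶠ n in p, ((m + (k + n) : ℕ) : ℤ) ∈ B}
    obtain ⟨E, hE⟩ := isCompact_univ.elim_finite_subcover U hU_open fun s _ =>
      Set.mem_iUnion.2 (hp.exists_eventually_add_mem hB s)
    refine ⟨E.map Nat.castEmbedding, fun C ⟨s, hs⟩ => ?_⟩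
    obtain ⟨m, hm, hsm⟩ := Set.mem_iUnion₂.1 (hE (Set.mem_univ s))
    refine ⟨m, Finset.mem_map_of_mem _ hm, s, ?_⟩
    filter_upwards [hs, hsm] with n hnC hnB
    exact ⟨hnC, by simpa [add_comm] using hnB⟩

end MinimalIdempotents

section JSets

variable {M : Type*} [AddCommMonoid M]

theorem exists_sum_of_mem_FS {a : Stream' M} {x : M} (hx : x ∈ Hindman.FS a) :
    ∃ H : Finset ℕ, H.Nonempty ∧ x = ∑ t ∈ H, a.get t := by
  induction hx with
  | head' a => exact ⟨{0}, by simp, by simp [Stream'.head]⟩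
  | tail' a x _ ih =>
    obtain ⟨H, hH, rfl⟩ := ih
    exact ⟨H.map (addRightEmbedding 1), hH.map, by rw [Finset.sum_map]; rfl⟩
  | cons' a x _ ih =>
    obtain ⟨H, -, rfl⟩ := ih
    refine ⟨insert 0 (H.map (addRightEmbedding 1)), Finset.insert_nonempty _ _, ?_⟩
    rw [Finset.sum_insert (by simp), Finset.sum_map]
    rfl

theorem IsSyndeticFamily.exists_sum_return {G : Type*} [AddCommGroup G] {𝓑 : Set (Set G)}
    (h𝓑 : IsSyndeticFamily 𝓑) {B : Set G} (hB : B ∈ 𝓑) (F : Finset (ℕ → M))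
    {T : Finset (M → G)} (hT : ∀ P ∈ T, IsPolynomialMap P) :
    ∃ H : Finset ℕ, H.Nonempty ∧ {x ∈ B | ∀ f ∈ F, ∀ P ∈ T, x + P (∑ t ∈ H, f t) ∈ B} ∈ 𝓑 := by
  classical
  obtain ⟨q, hq, hqFS⟩ :=
    Hindman.exists_idempotent_ultrafilter_le_FS (fun t f => f t : Stream' ((ℕ → M) → M))
  let F' : Finset (((ℕ → M) → M) → G) :=
    Finset.image₂ (fun P f => P ∘ Pi.evalAddMonoidHom (fun _ => M) f) T F
  have hF' : ∀ g ∈ F', IsPolynomialMap g := by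
    intro g hg
    obtain ⟨P, hP, f, -, rfl⟩ := Finset.mem_image₂.1 hg
    exact (hT P hP).comp_addMonoidHom _
  obtain ⟨y, hy, hyFS⟩ := ((isRecurrentAlong_of_isPolynomialMap h𝓑 hq hF' B hB).and hqFS).exists
  obtain ⟨H, hH, rfl⟩ := exists_sum_of_mem_FS hyFS
  refine ⟨H, hH, h𝓑.mono hy fun x hx => ⟨hx.1, fun f hf P hP => ?_⟩⟩
  simpa [Stream'.get] using hx.2 _ (Finset.mem_image₂_of_mem hP hf)

/-- Polynomial J-sets of integers for sequences in `M`: the polynomial analogue of `IsJSet`. -/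
def IsPolyJSet (M : Type*) [AddCommMonoid M] (A : Set ℤ) : Prop :=
  ∀ (F : Finset (ℕ → M)) (T : Finset (M → ℤ)), (∀ P ∈ T, IsPolynomialMap P) →
    ∃ (α : ℕ) (H : Finset ℕ), H.Nonempty ∧ ∀ f ∈ F, ∀ P ∈ T, α + P (∑ t ∈ H, f t) ∈ A

theorem IsPolyJSet.exists_forall_lt {A : Set ℤ} (hA : IsPolyJSet M A) (F : Finset (ℕ → M))
    {T : Finset (M → ℤ)} (hT : ∀ P ∈ T, IsPolynomialMap P) (N : ℕ) :
    ∃ (α : ℕ) (H : Finset ℕ), H.Nonempty ∧ (∀ t ∈ H, N < t) ∧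
      ∀ f ∈ F, ∀ P ∈ T, α + P (∑ t ∈ H, f t) ∈ A := by
  classical
  obtain ⟨α, H, hH, hα⟩ := hA (F.image fun f t => f (t + (N + 1))) T hT
  refine ⟨α, H.map (addRightEmbedding (N + 1)), hH.map, fun t ht => ?_, fun f hf P hP => ?_⟩
  · obtain ⟨u, -, rfl⟩ := Finset.mem_map.1 ht
    simp only [addRightEmbedding_apply]
    omega
  · simpa using hα _ (Finset.mem_image_of_mem _ hf) P hP

/-- Every member of `p`, viewed as a set of integers, is a polynomial J-set: the polynomial
analogue of `MemJ`. -/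
def IsPolyJUltrafilter (M : Type*) [AddCommMonoid M] (p : Ultrafilter ℕ) : Prop :=
  ∀ A : Set ℤ, (∀ᶠ n : ℕ in p, (n : ℤ) ∈ A) → IsPolyJSet M A

theorem IsMinimalIdempotent.isPolyJUltrafilter {p : Ultrafilter ℕ} (hp : IsMinimalIdempotent p) :
    IsPolyJUltrafilter M p := by
  intro A hA F T hT
  have hA' : A ∈ leftIdealSets p := ⟨p, by rwa [← uAdd_eq_add, hp.1]⟩
  obtain ⟨H, hH, r, hr⟩ := hp.isSyndeticFamily.exists_sum_return hA' F hT
  obtain ⟨α, -, hα⟩ := hr.exists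
  exact ⟨α, H, hH, hα⟩

end JSets

/-! ### Choosing the data along chains of finite sets -/

theorem exists_forall_of_forall_exists_update {X V : Type*} [PartialOrder X] [WellFoundedLT X]
    [DecidableEq X] [Nonempty V] {Φ : X → (X → V) → Prop}
    (hlocal : ∀ x g g', Set.EqOn g g' (Set.Iic x) → Φ x g → Φ x g')
    (hstep : ∀ x g, (∀ y < x, Φ y g) → ∃ v, Φ x (Function.update g x v)) :
    ∃ g, ∀ x, Φ x g := by
  classical
  choose! v hv using hstep
  let g : X → V := WellFounded.fix (wellFounded_lt (α := X)) fun x prev =>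
    v x fun y => if h : y < x then prev y h else Classical.arbitrary V
  let trunc (x : X) (y : X) : V := if y < x then g y else Classical.arbitrary V
  have hg (x : X) : g x = v x (trunc x) := WellFounded.fix_eq _ _ x
  refine ⟨g, fun x => ?_⟩
  induction x using WellFoundedLT.induction with
  | ind x ih =>
  have hbelow : ∀ y < x, Φ y (trunc x) := fun y hyx =>
    hlocal y g _ (fun z hzy => (if_pos (lt_of_le_of_lt hzy hyx)).symm) (ih y hyx)
  refine hlocal x _ g (fun y hyx => ?_) (hv x _ hbelow)
  rcases hyx.eq_or_lt with rfl | hlt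
  · rw [Function.update_self, hg]
  · rw [Function.update_of_ne hlt.ne]
    exact if_pos hlt

section Chains

variable {M : Type*} [AddCommMonoid M]

/-- `ChainSum g F K σ s`: some chain `F ⊂ K₁ ⊂ ⋯ ⊂ Kₙ = K` and choice of `fᵢ ∈ Kᵢ` have
`σ = ∑ᵢ (g Kᵢ).1` and `s = ∑ᵢ ∑_{t ∈ (g Kᵢ).2} fᵢ t`. -/
inductive ChainSum (g : Finset (ℕ → M) → ℕ × Finset ℕ) (F : Finset (ℕ → M)) :
    Finset (ℕ → M) → ℕ → M → Prop
  | nil : ChainSum g F F 0 0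
  | snoc {K K' : Finset (ℕ → M)} {σ : ℕ} {s : M} {f : ℕ → M} (h : ChainSum g F K σ s)
      (hK : K ⊂ K') (hf : f ∈ K') :
      ChainSum g F K' (σ + (g K').1) (s + ∑ t ∈ (g K').2, f t)

variable {g g' : Finset (ℕ → M) → ℕ × Finset ℕ} {F K : Finset (ℕ → M)} {σ : ℕ} {s : M}

theorem ChainSum.subset (h : ChainSum g F K σ s) : F ⊆ K := by
  induction h with
  | nil => exact subset_rfl
  | snoc _ hK _ ih => exact ih.trans hK.subset

theorem ChainSum.congr (h : ChainSum g F K σ s) (hg : Set.EqOn g g' (Set.Iic K)) :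
    ChainSum g' F K σ s := by
  induction h with
  | nil => exact nil
  | snoc _ hK hf ih =>
    rw [hg Set.self_mem_Iic]
    exact (ih (hg.mono (Set.Iic_subset_Iic.2 hK.le))).snoc hK hf

theorem finite_setOf_chainSum (g : Finset (ℕ → M) → ℕ × Finset ℕ) (K : Finset (ℕ → M)) :
    {z : Finset (ℕ → M) × ℕ × M | ChainSum g z.1 K z.2.1 z.2.2}.Finite := by
  classical
  induction K using Finset.strongInduction with
  | H K ih =>
  refine Set.Finite.subset ((Set.finite_singleton (K, 0, 0)).union
    ((Set.finite_Iio K).biUnion fun K' hK' => (ih K' hK').image2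
      (fun z f => (z.1, z.2.1 + (g K).1, z.2.2 + ∑ t ∈ (g K).2, f t)) K.finite_toSet)) ?_
  rintro ⟨F, σ, s⟩ h
  change ChainSum g F K σ s at h
  cases h with
  | nil => exact Or.inl rfl
  | @snoc K' _ σ s f h hK hf =>
    exact Or.inr (Set.mem_biUnion (x := K') hK ⟨(F, σ, s), h, f, hf, rfl⟩)

theorem ChainSum.of_strictMono {G : ℕ → Finset (ℕ → M)} (hG : StrictMono G) {f : ℕ → ℕ → M}
    (hf : ∀ i, f i ∈ G i) {β : Finset ℕ} (hβ : β.Nonempty) (hF : ∀ i ∈ β, F ⊂ G i) :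
    ChainSum g F (G (β.max' hβ)) (∑ i ∈ β, (g (G i)).1)
      (∑ i ∈ β, ∑ t ∈ (g (G i)).2, f i t) := by
  induction β using Finset.induction_on_max with
  | empty => exact absurd hβ Finset.not_nonempty_empty
  | insert a β hlt ih =>
    have ha : a ∉ β := fun h => (hlt a h).false
    have hmax : (insert a β).max' hβ = a :=
      le_antisymm (Finset.max'_le _ _ _ (by simpa using fun i hi => (hlt i hi).le))
        (Finset.le_max' _ _ (Finset.mem_insert_self a β))
    rw [hmax, Finset.sum_insert ha, Finset.sum_insert ha, add_comm (g (G a)).1,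
      add_comm (∑ t ∈ (g (G a)).2, f a t)]
    rcases β.eq_empty_or_nonempty with rfl | hne
    · simpa using nil.snoc (g := g) (hF a (Finset.mem_insert_self a ∅)) (hf a)
    · exact (ih hne fun i hi => hF i (Finset.mem_insert_of_mem hi)).snoc
        (hG (hlt _ (β.max'_mem hne))) (hf a)

/-- The requirement on the choice `g` at stage `K`: the block `(g K).2` is nonempty and lies to
the right of all earlier blocks, and every nonempty chain from `F` to `K` gives a value in
`S F`. -/
structure IsAdmissibleAt (T : Finset (M → ℤ)) (S : Finset (ℕ → M) → Set ℤ)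
    (g : Finset (ℕ → M) → ℕ × Finset ℕ) (K : Finset (ℕ → M)) : Prop where
  nonempty : (g K).2.Nonempty
  lt : ∀ F ⊂ K, ∀ x ∈ (g F).2, ∀ y ∈ (g K).2, x < y
  mem : ∀ F ⊂ K, ∀ σ s, ChainSum g F K σ s → ∀ P ∈ T, σ + P s ∈ S F

variable {T : Finset (M → ℤ)} {S : Finset (ℕ → M) → Set ℤ} {p : Ultrafilter ℕ}

theorem IsAdmissibleAt.congr (h : IsAdmissibleAt T S g K) (hg : Set.EqOn g g' (Set.Iic K)) :
    IsAdmissibleAt T S g' K where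
  nonempty := hg Set.self_mem_Iic ▸ h.nonempty
  lt F hF := by
    rw [← hg Set.self_mem_Iic, ← hg (Set.mem_Iic.2 hF.le)]
    exact h.lt F hF
  mem F hF σ s hs := h.mem F hF σ s (hs.congr hg.symm)

theorem IsAdmissibleAt.eventually_add_mem (hT : ∀ P ∈ T, IsPolynomialMap P)
    (hS : ∀ F, ∀ᶠ n : ℕ in p, (n : ℤ) ∈ S F)
    (hstar : ∀ F, ∀ y ∈ S F, ∀ᶠ n : ℕ in p, y + n ∈ S F) (hK : IsAdmissibleAt T S g K)
    (h : ChainSum g F K σ s) {P : M → ℤ} (hP : P ∈ T) :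
    ∀ᶠ n : ℕ in p, σ + P s + n ∈ S F := by
  cases h with
  | nil => simpa [(hT P hP).apply_zero] using hS F
  | snoc h hK' hf =>
    exact hstar F _ (hK.mem F (h.subset.trans_ssubset hK') _ _ (h.snoc hK' hf) P hP)

-- The identity `P (s + u) = P s + rebase s P u` reduces continuing a chain with sum `s` to finding
-- `α + rebase s P u` in the set of `x` such that `σ + P s + x` is in `S F`.
theorem exists_forall_chainSum_add_mem (hJ : IsPolyJUltrafilter M p)
    (hT : ∀ P ∈ T, IsPolynomialMap P) (hS : ∀ F, ∀ᶠ n : ℕ in p, (n : ℤ) ∈ S F)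
    (hstar : ∀ F, ∀ y ∈ S F, ∀ᶠ n : ℕ in p, y + n ∈ S F)
    (hg : ∀ K' ⊂ K, IsAdmissibleAt T S g K') (N : ℕ) :
    ∃ (α : ℕ) (H : Finset ℕ), H.Nonempty ∧ (∀ t ∈ H, N < t) ∧
      ∀ K' ⊂ K, ∀ F σ s, ChainSum g F K' σ s → ∀ f ∈ K, ∀ P ∈ T,
        ((σ + α : ℕ) : ℤ) + P (s + ∑ t ∈ H, f t) ∈ S F := by
  classical
  have hfin : (⋃ K' ∈ Set.Iio K,
      {z : Finset (ℕ → M) × ℕ × M | ChainSum g z.1 K' z.2.1 z.2.2}).Finite :=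
    (Set.finite_Iio K).biUnion fun K' _ => finite_setOf_chainSum g K'
  obtain ⟨Z, hZ⟩ := hfin.exists_finset
  replace hZ (F σ s) : (F, σ, s) ∈ Z ↔ ∃ K' ⊂ K, ChainSum g F K' σ s := by
    simpa using hZ (F, σ, s)
  let B : Set ℤ := {x | ∀ z ∈ Z, ∀ P ∈ T, z.2.1 + P z.2.2 + x ∈ S z.1}
  have hB : ∀ᶠ n : ℕ in p, (n : ℤ) ∈ B := by
    refine (eventually_all_finset Z).2 fun ⟨F, σ, s⟩ hz =>
      (eventually_all_finset T).2 fun P hP => ?_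
    obtain ⟨K', hK', h⟩ := (hZ F σ s).1 hz
    exact (hg K' hK').eventually_add_mem hT hS hstar h hP
  let T' := Finset.image₂ (fun P z => rebase z.2.2 P) T Z
  have hT' : ∀ P ∈ T', IsPolynomialMap P := by
    intro P' hP'
    obtain ⟨P, hP, z, -, rfl⟩ := Finset.mem_image₂.1 hP'
    exact (hT P hP).rebase _
  obtain ⟨α, H, hH, hlt, hα⟩ := (hJ B hB).exists_forall_lt K hT' N
  refine ⟨α, H, hH, hlt, fun K' hK' F σ s h f hf P hP => ?_⟩
  have hz : (F, σ, s) ∈ Z := (hZ F σ s).2 ⟨K', hK', h⟩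
  convert hα f hf _ (Finset.mem_image₂_of_mem hP hz) _ hz P hP using 1
  simp only [rebase_apply]
  push_cast
  ring

open Classical in
theorem exists_isAdmissibleAt_update (hJ : IsPolyJUltrafilter M p)
    (hT : ∀ P ∈ T, IsPolynomialMap P) (hS : ∀ F, ∀ᶠ n : ℕ in p, (n : ℤ) ∈ S F)
    (hstar : ∀ F, ∀ y ∈ S F, ∀ᶠ n : ℕ in p, y + n ∈ S F)
    (hg : ∀ K' ⊂ K, IsAdmissibleAt T S g K') :
    ∃ v, IsAdmissibleAt T S (Function.update g K v) K := by
  obtain ⟨α, H, hH, hlt, hα⟩ := exists_forall_chainSum_add_mem hJ hT hS hstar hg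
    (((Finset.Iio K).biUnion fun F => (g F).2).sup id)
  have hbelow {L : Finset (ℕ → M)} (hL : L ⊂ K) : Function.update g K (α, H) L = g L :=
    Function.update_of_ne hL.ne _ _
  refine ⟨(α, H), by simpa using hH, fun F hF x hx y hy => ?_, fun F hF σ s h P hP => ?_⟩
  · rw [hbelow hF] at hx
    rw [Function.update_self] at hy
    exact (Finset.le_sup (f := id)
      (Finset.mem_biUnion.2 ⟨F, Finset.mem_Iio.2 hF, hx⟩)).trans_lt (hlt y hy)
  · cases h with
    | nil => exact absurd hF (ssubset_irrefl _)
    | @snoc K' _ σ s f h hK' hf =>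
      rw [Function.update_self]
      exact hα K' hK' F σ s (h.congr fun L hL => hbelow (lt_of_le_of_lt hL hK')) f hf P hP

theorem exists_forall_isAdmissibleAt (hp : IdempotentUF p) (hJ : IsPolyJUltrafilter M p)
    (hT : ∀ P ∈ T, IsPolynomialMap P) (hS : ∀ F, ∀ᶠ n : ℕ in p, (n : ℤ) ∈ S F) :
    ∃ g, ∀ K, IsAdmissibleAt T S g K := by
  classical
  choose S' hS'S hS' hstar using fun F => hp.exists_subset_forall_eventually_add_mem (hS F)
  obtain ⟨g, hg⟩ := exists_forall_of_forall_exists_update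
    (Φ := fun K g => IsAdmissibleAt T S' g K) (fun _ _ _ hg h => h.congr hg)
    fun _ _ => exists_isAdmissibleAt_update hJ hT hS' hstar
  exact ⟨g, fun K => ⟨(hg K).nonempty, (hg K).lt,
    fun F hF σ s h P hP => hS'S F ((hg K).mem F hF σ s h P hP)⟩⟩

end Chains

/-! ### Several idempotents -/

section LinearCombinations

variable {M : Type*} [AddCommMonoid M] {T : Finset (M → ℤ)}

theorem eventually_linComb_succ {m : ℕ} {a : Fin (m + 1) → ℕ} {p : Fin (m + 1) → Ultrafilter ℕ}
    {φ : ℕ → Prop} :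
    (∀ᶠ n in linComb (m + 1) a p, φ n) ↔
      ∀ᶠ x in p 0, ∀ᶠ w in linComb m (fun l => a l.succ) fun l => p l.succ, φ (a 0 * x + w) :=
  Iff.rfl

/-- The blocks `(g K).2` are nonempty and increase along chains. -/
structure HasIncreasingBlocks (g : Finset (ℕ → M) → ℕ × Finset ℕ) : Prop where
  nonempty : ∀ K, (g K).2.Nonempty
  lt : ∀ F K, F ⊂ K → ∀ x ∈ (g F).2, ∀ y ∈ (g K).2, x < y

-- The value for `p 0, …, p m` along consecutive chains from `K 0` is the contribution of the first
-- chain plus a value for `p 1, …, p m` along chains from `K 1`; there are only finitely many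
-- possible first contributions, so the conditions they impose on the rest hold eventually.
theorem exists_forall_chainSum_linComb_mem {m : ℕ} {a : Fin m → ℕ} {p : Fin m → Ultrafilter ℕ}
    (hp : ∀ l, IdempotentUF (p l)) (hJ : ∀ l, IsPolyJUltrafilter M (p l))
    (hT : ∀ P ∈ T, IsPolynomialMap P) {𝒜 : Finset (ℕ → M) → Set ℤ}
    (h𝒜 : ∀ F, ∀ᶠ n : ℕ in linComb m a p, (n : ℤ) ∈ 𝒜 F) :
    ∃ g : Fin m → Finset (ℕ → M) → ℕ × Finset ℕ, (∀ l, HasIncreasingBlocks (g l)) ∧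
      ∀ K : Fin (m + 1) → Finset (ℕ → M), StrictMono K → ∀ (σ : Fin m → ℕ) (s : Fin m → M),
        (∀ l, ChainSum (g l) (K l.castSucc) (K l.succ) (σ l) (s l)) →
        ∀ P : Fin m → M → ℤ, (∀ l, P l ∈ T) → ∑ l, a l * (σ l + P l (s l)) ∈ 𝒜 (K 0) := by
  induction m generalizing 𝒜 with
  | zero =>
    refine ⟨Fin.elim0, Fin.rec0, fun K _ _ _ _ _ _ => ?_⟩
    have h0 : ((0 : ℕ) : ℤ) ∈ 𝒜 (K 0) := h𝒜 (K 0)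
    simpa using h0
  | succ m ih =>
    let r := linComb m (fun l => a l.succ) fun l => p l.succ
    obtain ⟨g₀, hg₀⟩ := exists_forall_isAdmissibleAt (T := T)
      (S := fun F => {x : ℤ | ∀ᶠ w : ℕ in r, a 0 * x + w ∈ 𝒜 F}) (hp 0) (hJ 0) hT fun F => by
        simpa using eventually_linComb_succ.1 (h𝒜 F)
    let 𝒜' (K : Finset (ℕ → M)) : Set ℤ := {w | ∀ z ∈ {z : Finset (ℕ → M) × ℕ × M |
      ChainSum g₀ z.1 K z.2.1 z.2.2}, ∀ P ∈ T, z.1 ⊂ K → a 0 * (z.2.1 + P z.2.2) + w ∈ 𝒜 z.1}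
    have h𝒜' (K) : ∀ᶠ w : ℕ in r, (w : ℤ) ∈ 𝒜' K :=
      (eventually_all_finite (finite_setOf_chainSum g₀ K)).2 fun ⟨F, σ, s⟩ h =>
        (eventually_all_finset T).2 fun P hP => eventually_imp_distrib_left.2 fun hF =>
          (hg₀ K).mem F hF σ s h P hP
    obtain ⟨g, hg, hmem⟩ := ih (fun l => hp l.succ) (fun l => hJ l.succ) h𝒜'
    refine ⟨Fin.cons g₀ g, Fin.cases ⟨fun K => (hg₀ K).nonempty, fun F K => (hg₀ K).lt F⟩ hg,
      fun K hK σ s h P hP => ?_⟩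
    rw [Fin.sum_univ_succ]
    exact hmem (fun l => K l.succ) (hK.comp (Fin.strictMono_succ)) _ _ (fun l => h l.succ) _
      (fun l => hP l.succ) (K 0, σ 0, s 0) (h 0) (P 0) (hP 0) (hK Fin.zero_lt_one)

theorem linear_comb_polynomial_CST_II_general {m : ℕ} {a : Fin m → ℕ}
    {p : Fin m → Ultrafilter ℕ} (hp : ∀ l, IdempotentUF (p l))
    (hJ : ∀ l, IsPolyJUltrafilter M (p l)) {A : Set ℤ}
    (hA : ∀ᶠ n : ℕ in linComb m a p, (n : ℤ) ∈ A) (hT : ∀ P ∈ T, IsPolynomialMap P) :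
    ∃ (α : Fin m → Finset (ℕ → M) → ℕ) (H : Fin m → Finset (ℕ → M) → Finset ℕ),
      (∀ l F, (H l F).Nonempty) ∧
      (∀ l F G, F ⊂ G → ∀ x ∈ H l F, ∀ y ∈ H l G, x < y) ∧
      ∀ G : ℕ → Finset (ℕ → M), StrictMono G → ∀ f : ℕ → ℕ → M, (∀ i, f i ∈ G i) →
        ∀ P : Fin m → M → ℤ, (∀ l, P l ∈ T) → ∀ β : Fin m → Finset ℕ, (∀ l, (β l).Nonempty) →
          (∀ l l', l < l' → ∀ x ∈ β l, ∀ y ∈ β l', x < y) →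
          ∑ l, a l * (((∑ i ∈ β l, α l (G i) : ℕ) : ℤ) +
            P l (∑ i ∈ β l, ∑ t ∈ H l (G i), f i t)) ∈ A := by
  obtain ⟨g, hg, hmem⟩ := exists_forall_chainSum_linComb_mem (𝒜 := fun _ => A) hp hJ hT fun _ => hA
  refine ⟨fun l F => (g l F).1, fun l F => (g l F).2, fun l => (hg l).nonempty,
    fun l => (hg l).lt, fun G hG f hf P hP β hβ hlt => ?_⟩
  let K : Fin (m + 1) → Finset (ℕ → M) := Fin.cons ∅ fun l => G ((β l).max' (hβ l))
  have hK (l : Fin m) : ∀ i ∈ β l, K l.castSucc ⊂ G i := by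
    intro i hi
    rcases Fin.eq_zero_or_eq_succ l.castSucc with h0 | ⟨l', hl'⟩
    · rw [h0]
      exact Finset.empty_ssubset.2 ⟨f i, hf i⟩
    · have hll' : l' < l := Fin.castSucc_lt_castSucc_iff.1 (hl' ▸ Fin.castSucc_lt_succ)
      rw [hl']
      exact hG (hlt l' l hll' _ ((β l').max'_mem _) i hi)
  exact hmem K (Fin.strictMono_iff_lt_succ.2 fun l => hK l _ ((β l).max'_mem (hβ l))) _ _
    (fun l => .of_strictMono hG hf (hβ l) (hK l)) P hP

end LinearCombinations

/-- Polynomial extension of the linear-combination central sets theorem, several minimal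
idempotents. -/
theorem linear_comb_polynomial_CST_II (m : ℕ) (hm : 1 ≤ m) (a : Fin m → ℕ)
    (p : Fin m → Ultrafilter ℕ) (hp : ∀ i, IsMinimalIdempotent (p i))
    (A : Set ℕ) (hA : A ∈ linComb m a p)
    (T : Finset (ℕ → ℕ)) (hT : T.Nonempty) (hTP : ∀ P ∈ T, IsPolyZeroConst P) :
    ∃ (α : Fin m → Finset (ℕ → ℕ) → ℕ) (H : Fin m → Finset (ℕ → ℕ) → Finset ℕ),
      (∀ (l : Fin m) (F : Finset (ℕ → ℕ)), F.Nonempty → (H l F).Nonempty) ∧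
      (∀ (l : Fin m) (F G : Finset (ℕ → ℕ)), F.Nonempty → F ⊂ G →
        ∀ x ∈ H l F, ∀ y ∈ H l G, x < y) ∧
      (∀ G : ℕ → Finset (ℕ → ℕ),
        (∀ i, (G i).Nonempty) → (∀ i j, i < j → G i ⊂ G j) →
        ∀ f : ℕ → ℕ → ℕ, (∀ i, f i ∈ G i) →
        ∀ P : Fin m → ℕ → ℕ, (∀ l, P l ∈ T) →
        ∀ β : Fin m → Finset ℕ,
          (∀ l, (β l).Nonempty) →
          (∀ l l' : Fin m, l < l' → ∀ x ∈ β l, ∀ y ∈ β l', x < y) →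
          ∑ l : Fin m, a l * ((∑ i ∈ β l, α l (G i)) +
              P l (∑ i ∈ β l, ∑ t ∈ H l (G i), f i t)) ∈ A) := by
  classical
  obtain ⟨α, H, hH, hlt, hmem⟩ := linear_comb_polynomial_CST_II_general
    (A := {x | x.toNat ∈ A}) (T := T.image fun P x => (P x : ℤ)) (fun l => (hp l).1)
    (fun l => (hp l).isPolyJUltrafilter) hA
    (Finset.forall_mem_image.2 fun P hP => (hTP P hP).isPolynomialMap)
  refine ⟨α, H, fun l F _ => hH l F, fun l F G _ => hlt l F G,
    fun G _ hG f hf P hP β hβ hβlt => ?_⟩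
  exact_mod_cast hmem G (fun i j => hG i j) f hf (fun l x => P l x)
    (fun l => Finset.mem_image_of_mem _ (hP l)) β hβ hβlt

end MultiCST
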